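/- arXiv:quant-ph/0608241 — 4 statements merged into one kernel-verified Lean document; each statement's English description precedes it below -/
import Mathlib

section
/- In ℤ_14, the additive group of integers modulo 14, the pair ({0}, {1,3,7}) is a strictly addressable workspace–base scheme; consequently, in ℤ the pair ({14z : z ∈ ℤ}, {1,3,7}) is a strictly addressable workspace–base scheme. -/
/-!
In `ℤ₁₄` the value `p' - r' 2 = 7 = -7` leaves only four candidates `p' ∈ {0, 1, 3, 7} + 7`, and
the constraints `p' - r' 0 = ±1`, `p' - r' 1 = ±3` exclude all of them except `p' = 0`.

For `ℤ`, reduction modulo `14` sends `14ℤ` to `{0}` and is injective on `{1, 3, 7}`, whose image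
avoids `0`. A tuple in `ℤ` that satisfies the hypotheses therefore reduces to one in `ℤ₁₄`, and
strict addressability there forces `r' = r`. Finally `p' - 1 = ±(p - 1)` and `p' - 3 = ±(p - 3)`
give `p' = p`, since the two minus signs would mean `p' + p = 2` and `p' + p = 6`.
-/

namespace GlobAb

/-- For the translation action of an abelian group `G` on itself,
`(p,q) ∼ (p',q')` iff `p - q = p' - q'`, so the workspace--base scheme
`(P, {r 1, …, r k})` is *strictly addressable* if for every `p ∈ P` and every
`(k+1)`-tuple `(p', r' 1, …, r' k) ∈ G × (P ∪ R)^k` with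
`p' - r' i = ±(p - r i)` for all `i`, one has `p' = p` and `r' i = r i`. -/
def StrictlyAddressable {G : Type*} [AddCommGroup G] (P : Set G) {k : ℕ}
    (r : Fin k → G) : Prop :=
  ∀ p ∈ P, ∀ p' : G, ∀ r' : Fin k → G,
    (∀ i, r' i ∈ P ∪ Set.range r) →
    (∀ i, p' - r' i = p - r i ∨ p' - r' i = -(p - r i)) →
    p' = p ∧ ∀ i, r' i = r i

end GlobAb

namespace GlobAb

theorem disjoint_zmod :
    Disjoint ({0} : Set (ZMod 14)) (Set.range ![(1 : ZMod 14), 3, 7]) := by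
  rw [Set.disjoint_singleton_left]
  rintro ⟨i, hi⟩
  revert i
  decide

theorem strictlyAddressable_zmod :
    StrictlyAddressable ({0} : Set (ZMod 14)) ![(1 : ZMod 14), 3, 7] := by
  rintro p rfl p' r' hmem hdist
  have key : ∀ a b c : ZMod 14,
      (c = 0 ∨ c = 1 ∨ c = 3 ∨ c = 7) → (p' - c = 0 - 7 ∨ p' - c = -(0 - 7)) →
      (a = 0 ∨ a = 1 ∨ a = 3 ∨ a = 7) → (p' - a = 0 - 1 ∨ p' - a = -(0 - 1)) →
      (b = 0 ∨ b = 1 ∨ b = 3 ∨ b = 7) → (p' - b = 0 - 3 ∨ p' - b = -(0 - 3)) →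
      p' = 0 ∧ a = 1 ∧ b = 3 ∧ c = 7 := by
    clear hmem hdist r'
    rintro a b c (rfl | rfl | rfl | rfl) hc (rfl | rfl | rfl | rfl) ha
      (rfl | rfl | rfl | rfl) hb <;> revert p' <;> decide
  have hm : ∀ i, r' i = 0 ∨ r' i = 1 ∨ r' i = 3 ∨ r' i = 7 := by
    intro i
    rcases hmem i with h | ⟨j, hj⟩
    · exact Or.inl h
    · fin_cases j
      · exact Or.inr (Or.inl hj.symm)
      · exact Or.inr (Or.inr (Or.inl hj.symm))
      · exact Or.inr (Or.inr (Or.inr hj.symm))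
  obtain ⟨h, h0, h1, h2⟩ := key (r' 0) (r' 1) (r' 2) (hm 2) (hdist 2) (hm 0) (hdist 0)
    (hm 1) (hdist 1)
  refine ⟨h, fun i => ?_⟩
  fin_cases i
  exacts [h0, h1, h2]

theorem disjoint_int :
    Disjoint {x : ℤ | ∃ z : ℤ, x = 14 * z} (Set.range ![(1 : ℤ), 3, 7]) := by
  rw [Set.disjoint_left]
  rintro x ⟨z, rfl⟩ ⟨i, hi⟩
  fin_cases i <;> simp at hi <;> omega

theorem cast_base (i : Fin 3) :
    ((![(1 : ℤ), 3, 7] i : ℤ) : ZMod 14) = ![(1 : ZMod 14), 3, 7] i := by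
  fin_cases i <;> rfl

theorem cast_workspace (z : ℤ) : ((14 * z : ℤ) : ZMod 14) = 0 :=
  (ZMod.intCast_zmod_eq_zero_iff_dvd _ 14).2 ⟨z, rfl⟩

theorem strictlyAddressable_int :
    StrictlyAddressable {x : ℤ | ∃ z : ℤ, x = 14 * z} ![(1 : ℤ), 3, 7] := by
  rintro p ⟨z, rfl⟩ p' r' hmem hdist
  obtain ⟨-, hr⟩ := strictlyAddressable_zmod 0 rfl (p' : ZMod 14) (fun i => (r' i : ZMod 14))
    (by
      intro i
      rcases hmem i with ⟨w, hw⟩ | ⟨j, hj⟩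
      · left
        simp only [hw, cast_workspace, Set.mem_singleton_iff]
      · right
        exact ⟨j, by rw [← hj, cast_base]⟩)
    (by
      intro i
      rw [← cast_base, ← cast_workspace z]
      exact_mod_cast (hdist i).imp (congrArg (Int.cast : ℤ → ZMod 14))
        (congrArg (Int.cast : ℤ → ZMod 14)))
  -- The base is injective modulo `14` and avoids `0`, so `r'` is recovered from its residues.
  have hr' : ∀ i, r' i = ![(1 : ℤ), 3, 7] i := by
    intro i
    have hi : ((r' i : ℤ) : ZMod 14) = ![(1 : ZMod 14), 3, 7] i := hr i
    rcases hmem i with ⟨w, hw⟩ | ⟨j, hj⟩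
    · rw [hw, cast_workspace] at hi
      exact (Set.disjoint_left.1 disjoint_zmod rfl ⟨i, hi.symm⟩).elim
    · rw [← hj, cast_base] at hi
      have inj : ∀ i j : Fin 3,
          ![(1 : ZMod 14), 3, 7] j = ![(1 : ZMod 14), 3, 7] i → j = i := by decide
      rw [← hj, inj i j hi]
  refine ⟨?_, hr'⟩
  have d0 := hdist 0
  have d1 := hdist 1
  rw [hr'] at d0 d1
  simp only [Matrix.cons_val_zero, Matrix.cons_val_one] at d0 d1
  omega

end GlobAb

open GlobAb in
/-- In `ℤ₁₄`, the pair `({0}, {1,3,7})` is a strictly addressable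
workspace--base scheme; consequently, in `ℤ` the pair `(14ℤ, {1,3,7})` is a
strictly addressable workspace--base scheme. -/
theorem stmt10 :
    (Disjoint ({0} : Set (ZMod 14)) (Set.range ![(1 : ZMod 14), 3, 7]) ∧
      StrictlyAddressable ({0} : Set (ZMod 14)) ![(1 : ZMod 14), 3, 7]) ∧
    (Disjoint {x : ℤ | ∃ z : ℤ, x = 14 * z} (Set.range ![(1 : ℤ), 3, 7]) ∧
      StrictlyAddressable {x : ℤ | ∃ z : ℤ, x = 14 * z} ![(1 : ℤ), 3, 7]) := by
  exact ⟨⟨disjoint_zmod, strictlyAddressable_zmod⟩, disjoint_int, strictlyAddressable_int⟩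
end

section
/- Let G be an abelian group and r_1, r_2, r_3 ∈ G such that r_i − r_j ≠ r_{i'} − r_{j'} whenever i ≠ j, i' ≠ j' and (i,j) ≠ (i',j'). Then for every p ∈ G with 2p ∉ {r_1+r_2, r_1+r_3, r_2+r_3}, for every p' ∈ G and every r_1', r_2', r_3' ∈ {r_1, r_2, r_3}, the condition p − r_i = ±(p' − r_i') for i = 1,2,3 implies p' = p, r_1' = r_1, r_2' = r_2 and r_3' = r_3. -/
/-- Distinct indices have distinct images and the difference of these images determines the
ordered pair of indices. -/
lemma eq_of_sub_eq {G ι : Type*} [AddCommGroup G] {r : ι → G}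
    (hdiff : ∀ i j i' j' : ι, i ≠ j → i' ≠ j' → (i, j) ≠ (i', j') → r i - r j ≠ r i' - r j')
    {i j a b : ι} (hij : i ≠ j) (h : r i - r j = r a - r b) : a = i ∧ b = j := by
  have hab : a ≠ b := by
    rintro rfl
    -- A vanishing difference would coincide with its reverse.
    refine hdiff i j j i hij hij.symm (by simp [hij]) ?_
    rw [sub_self] at h
    rw [h, ← neg_sub, h, neg_zero]
  by_contra hne
  refine hdiff i j a b hij hab (fun he => hne ?_) h
  simp only [Prod.mk.injEq] at he
  exact ⟨he.1.symm, he.2.symm⟩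

lemma eq_of_plus_plus {G ι : Type*} [AddCommGroup G] {r : ι → G}
    (hdiff : ∀ i j i' j' : ι, i ≠ j → i' ≠ j' → (i, j) ≠ (i', j') → r i - r j ≠ r i' - r j')
    {p p' : G} (hp : ∀ i j, i ≠ j → p + p ≠ r i + r j) {σ : ι → ι}
    (h : ∀ i, p - r i = p' - r (σ i) ∨ p - r i = -(p' - r (σ i)))
    {i j : ι} (hij : i ≠ j)
    (hi : p - r i = p' - r (σ i)) (hj : p - r j = p' - r (σ j)) :
    p' = p ∧ ∀ k, r (σ k) = r k := by
  obtain ⟨h1, -⟩ := eq_of_sub_eq hdiff hij (a := σ i) (b := σ j) (by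
    linear_combination (norm := abel) hj - hi)
  rw [h1] at hi
  have hpp : p' = p := (sub_left_injective hi).symm
  refine ⟨hpp, fun k => ?_⟩
  rw [hpp] at h
  rcases h k with hk | hk
  · exact (sub_right_injective hk).symm
  · by_contra hne
    refine hp k (σ k) (fun he => hne (by rw [← he])) ?_
    rw [neg_sub, sub_eq_sub_iff_add_eq_add] at hk
    rw [hk, add_comm]

lemma false_of_minus_minus {G ι : Type*} [AddCommGroup G] {r : ι → G}
    (hdiff : ∀ i j i' j' : ι, i ≠ j → i' ≠ j' → (i, j) ≠ (i', j') → r i - r j ≠ r i' - r j')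
    {p p' : G} (hp : ∀ i j, i ≠ j → p + p ≠ r i + r j) {σ : ι → ι}
    (h : ∀ i, p - r i = p' - r (σ i) ∨ p - r i = -(p' - r (σ i)))
    {i j k : ι} (hij : i ≠ j) (hik : i ≠ k) (hjk : j ≠ k) (hall : ∀ m, m = i ∨ m = j ∨ m = k)
    (hi : p - r i = -(p' - r (σ i))) (hj : p - r j = -(p' - r (σ j))) : False := by
  have swap : ∀ l, i ≠ l → p - r l = -(p' - r (σ l)) → σ l = i ∧ σ i = l := fun l hil hl =>
    eq_of_sub_eq hdiff hil (by linear_combination (norm := abel) hl - hi)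
  have h1 := (swap j hij hj).2
  rcases h k with hk | hk
  · rw [h1] at hi
    rcases hall (σ k) with e | e | e <;> rw [e] at hk
    · exact hp j k hjk (by linear_combination (norm := abel) hi + hk)
    · exact hp i k hik (by linear_combination (norm := abel) hi + hk)
    · exact hp i j hij (by linear_combination (norm := abel) hi + hk)
  · exact hjk (h1.symm.trans (swap k hik hk).2)

open GlobAb in
/-- If `r 1, r 2, r 3 ∈ G` have pairwise distinct nonzero differences,
then for every `p` with `2p ∉ {r₁+r₂, r₁+r₃, r₂+r₃}`, every `p' ∈ G` and
`r' i ∈ {r₁,r₂,r₃}` with `p − r i = ±(p' − r' i)` for `i = 1,2,3` satisfy `p' = p`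
and `r' i = r i`. -/
theorem stmt11 {G : Type*} [AddCommGroup G] (r : Fin 3 → G)
    (hdiff : ∀ i j i' j' : Fin 3, i ≠ j → i' ≠ j' → (i, j) ≠ (i', j') →
      r i - r j ≠ r i' - r j')
    (p : G) (hp : p + p ∉ ({r 0 + r 1, r 0 + r 2, r 1 + r 2} : Set G))
    (p' : G) (r' : Fin 3 → G) (hr' : ∀ i, r' i ∈ Set.range r)
    (h : ∀ i, p - r i = p' - r' i ∨ p - r i = -(p' - r' i)) :
    p' = p ∧ ∀ i, r' i = r i := by
  choose σ hσ using hr'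
  obtain rfl : r' = fun i => r (σ i) := funext fun i => (hσ i).symm
  have hp' : ∀ i j, i ≠ j → p + p ≠ r i + r j := by
    intro i j hij he
    simp only [Set.mem_insert_iff, Set.mem_singleton_iff, not_or] at hp
    obtain ⟨h01, h02, h12⟩ := hp
    have he' := he.trans (add_comm _ _)
    fin_cases i <;> fin_cases j <;> first
      | exact hij rfl
      | exact h01 he
      | exact h02 he
      | exact h12 he
      | exact h01 he'
      | exact h02 he'
      | exact h12 he'
  have pos {i j : Fin 3} := eq_of_plus_plus hdiff hp' h (i := i) (j := j)
  have neg {i j k : Fin 3} := false_of_minus_minus hdiff hp' h (i := i) (j := j) (k := k)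
  rcases h 0 with h0 | h0 <;> rcases h 1 with h1 | h1
  · exact pos (by decide) h0 h1
  · rcases h 2 with h2 | h2
    · exact pos (by decide) h0 h2
    · exact (neg (k := 0) (by decide) (by decide) (by decide) (by decide) h1 h2).elim
  · rcases h 2 with h2 | h2
    · exact pos (by decide) h1 h2
    · exact (neg (k := 1) (by decide) (by decide) (by decide) (by decide) h0 h2).elim
  · exact (neg (k := 2) (by decide) (by decide) (by decide) (by decide) h0 h1).elim
end

section
/- Let G be an abelian group admitting a surjective homomorphism φ: G → ℤ_4. Let r_1, r_2, r_3, r_4 ∈ φ^{-1}({1,3}) be such that φ({r_1,r_2,r_3}) = {1,3}, 3r_4 ≠ r_1 + r_2 + r_3, and r_i − r_j ≠ r_{i'} − r_{j'} whenever i ≠ j, i' ≠ j' and (i,j) ≠ (i',j') (indices ranging over {1,2,3,4}). Let P = φ^{-1}(0). Then for every r_4' ∈ G and every r_1', r_2', r_3' ∈ P ∪ {r_1, r_2, r_3, r_4}, the condition r_4' − r_i' = ±(r_4 − r_i) for i = 1,2,3 implies r_4' = r_4 and r_i' = r_i for i = 1,2,3. -/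
/-!
Reduce modulo 4. Every `r 3 - r i` maps to `0` or `2`, so signs are invisible there, and since both
residues `1` and `3` occur among `r 0, r 1, r 2`, both `φ r4'` and `φ r4' + 2` occur among the
`φ (r' i)`. No point of `P ∪ {r 0, …, r 3}` has residue `2`, so `φ r4'` is odd; hence every `φ (r' i)`
is odd and `r' i = r (a i)` for some index `a i`.

What remains is a statement about the four points `r 0, …, r 3`, whose nonzero differences determine
their endpoints. Among the three signs, two agree. Two plus signs force `r4' = r 3`, and then the
third sign is plus as well (`GlobAb.eq_of_plus_plus`). Two minus signs at `i ≠ j` force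
`a i = j`, `a j = i` and `r4' = r i + r j - r 3`, which is incompatible with either sign at the third
index; the only case not excluded by distinctness of differences is `3 r 3 = r 0 + r 1 + r 2`
(`GlobAb.false_of_minus_minus`).
-/

namespace GlobAb

/-- A difference of two of the points determines its endpoints, unless it is zero. -/
def DistinctDiffs {G : Type*} [AddCommGroup G] (r : Fin 4 → G) : Prop :=
  ∀ a b c d : Fin 4, r a - r b = r c - r d → (a = b ∧ c = d) ∨ (a = c ∧ b = d)

theorem distinctDiffs_of_ne {G : Type*} [AddCommGroup G] {r : Fin 4 → G}
    (hdiff : ∀ i j i' j' : Fin 4, i ≠ j → i' ≠ j' → (i, j) ≠ (i', j') →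
      r i - r j ≠ r i' - r j') : DistinctDiffs r := by
  have hinj : ∀ a b, r a = r b → a = b := by
    intro a b hab
    by_contra hne
    -- if `r a = r b`, then `(a, b)` and `(b, a)` have the same difference
    exact hdiff a b b a hne (Ne.symm hne) (fun h => hne (Prod.ext_iff.1 h).1) (by rw [hab])
  intro a b c d h
  by_cases hab : a = b
  · subst hab
    exact Or.inl ⟨rfl, hinj _ _ (sub_eq_zero.1 (by rw [← h, sub_self]))⟩
  by_cases hcd : c = d
  · subst hcd
    exact absurd (hinj _ _ (sub_eq_zero.1 (by rw [h, sub_self]))) hab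
  right
  by_contra hne
  exact hdiff a b c d hab hcd (fun h' => hne (Prod.ext_iff.1 h')) h

theorem eq_of_plus_plus {G : Type*} [AddCommGroup G] {r : Fin 4 → G} (hd : DistinctDiffs r)
    {x : G} {i j k a b c : Fin 4} (hij : i ≠ j) (hk : k ≠ 3)
    (hi : x - r a = r 3 - r i) (hj : x - r b = r 3 - r j)
    (hc : x - r c = r 3 - r k ∨ x - r c = -(r 3 - r k)) :
    x = r 3 ∧ a = i ∧ b = j ∧ c = k := by
  have e : r a - r i = r b - r j := by
    linear_combination (norm := abel) hj - hi
  obtain ⟨rfl, rfl⟩ | ⟨-, h⟩ := hd _ _ _ _ e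
  · have hx : x = r 3 := by simpa using hi
    subst hx
    refine ⟨rfl, rfl, rfl, ?_⟩
    rcases hc with hc | hc
    · have e : r c - r k = r 3 - r 3 := by linear_combination (norm := abel) -hc
      obtain ⟨h, -⟩ | ⟨h, h'⟩ := hd _ _ _ _ e
      · exact h
      · exact h.trans h'.symm
    · have e : r c - r 3 = r 3 - r k := by linear_combination (norm := abel) -hc
      obtain ⟨-, h⟩ | ⟨-, h⟩ := hd _ _ _ _ e <;> exact absurd h.symm hk
  · exact absurd h hij

theorem false_of_minus_minus {G : Type*} [AddCommGroup G] {r : Fin 4 → G} (hd : DistinctDiffs r)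
    {x : G} {i j k a b c : Fin 4} (hij : i ≠ j) (hik : i ≠ k) (hjk : j ≠ k)
    (hi3 : i ≠ 3) (hj3 : j ≠ 3) (hk3 : k ≠ 3)
    (hsum : r 3 + r 3 + r 3 ≠ r i + r j + r k)
    (hi : x - r a = -(r 3 - r i)) (hj : x - r b = -(r 3 - r j))
    (hc : x - r c = r 3 - r k ∨ x - r c = -(r 3 - r k)) : False := by
  -- two minus signs swap the corresponding base points
  have swap : ∀ {i j a b : Fin 4}, i ≠ j → x - r a = -(r 3 - r i) →
      x - r b = -(r 3 - r j) → a = j ∧ b = i := by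
    intro i j a b hij hi hj
    have e : r a - r b = r j - r i := by linear_combination (norm := abel) hj - hi
    obtain ⟨-, h⟩ | h := hd _ _ _ _ e
    · exact absurd h.symm hij
    · exact h
  -- `r 3` is never the midpoint of two of the other points
  have mid : ∀ {p q : Fin 4}, p ≠ 3 → r p - r 3 = r 3 - r q → False := by
    intro p q hp e
    obtain ⟨h, -⟩ | ⟨h, -⟩ := hd _ _ _ _ e <;> exact hp h
  obtain ⟨rfl, rfl⟩ := swap hij hi hj
  rcases hc with hc | hc
  · have hcases : c = b ∨ c = a ∨ c = k ∨ c = 3 := by omega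
    rcases hcases with rfl | rfl | rfl | rfl
    · exact mid (p := a) (q := k) hj3 (by linear_combination (norm := abel) hc - hi)
    · exact mid (p := b) (q := k) hi3 (by linear_combination (norm := abel) hc - hi)
    · exact mid (p := b) (q := a) hi3 (by linear_combination (norm := abel) hc - hi)
    · exact hsum (by linear_combination (norm := abel) hi - hc)
  · exact hjk (swap hik hi hc).1

/-- `x`, `u`, `v`, `d` are the residues of `r4'`, two of the `r' i`, and `r 3`, for indices `i`
with `φ (r i) = 1` and `φ (r i) = 3` respectively. -/
theorem odd_of_residues : ∀ x u v d : ZMod 4, (d = 1 ∨ d = 3) → u ≠ 2 → v ≠ 2 →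
    (x - u = d - 1 ∨ x - u = -(d - 1)) → (x - v = d - 3 ∨ x - v = -(d - 3)) →
    x = 1 ∨ x = 3 := by
  decide

theorem residue_ne_zero : ∀ x u d e : ZMod 4, (x = 1 ∨ x = 3) → (d = 1 ∨ d = 3) →
    (e = 1 ∨ e = 3) → (x - u = d - e ∨ x - u = -(d - e)) → u ≠ 0 := by
  decide

end GlobAb


open GlobAb in
/-- With `φ : G → ℤ₄` surjective, `r₁,…,r₄ ∈ φ⁻¹({1,3})`,
`φ({r₁,r₂,r₃}) = {1,3}`, `3r₄ ≠ r₁+r₂+r₃`, and pairwise distinct nonzero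
differences among `r₁,…,r₄`, and `P = φ⁻¹(0)`: for every `r₄' ∈ G` and
`r₁',r₂',r₃' ∈ P ∪ {r₁,r₂,r₃,r₄}` with `r₄' − r_i' = ±(r₄ − r_i)` for `i = 1,2,3`,
one has `r₄' = r₄` and `r_i' = r_i` for `i = 1,2,3`. -/
theorem stmt15 {G : Type*} [AddCommGroup G]
    (φ : G →+ ZMod 4) (hφ : Function.Surjective φ)
    (r : Fin 4 → G) (hr : ∀ i, φ (r i) ∈ ({1, 3} : Set (ZMod 4)))
    (himg : φ '' {r 0, r 1, r 2} = {1, 3})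
    (h34 : r 3 + r 3 + r 3 ≠ r 0 + r 1 + r 2)
    (hdiff : ∀ i j i' j' : Fin 4, i ≠ j → i' ≠ j' → (i, j) ≠ (i', j') →
      r i - r j ≠ r i' - r j')
    (P : Set G) (hPdef : P = φ ⁻¹' {0})
    (r4' : G) (r' : Fin 3 → G)
    (hr' : ∀ i, r' i ∈ P ∪ {r 0, r 1, r 2, r 3})
    (h : ∀ i : Fin 3, r4' - r' i = r 3 - r i.castSucc ∨
      r4' - r' i = -(r 3 - r i.castSucc)) :
    r4' = r 3 ∧ ∀ i : Fin 3, r' i = r i.castSucc := by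
  have hr3 : ∀ i, φ (r i) = 1 ∨ φ (r i) = 3 := by simpa using hr
  have hφh : ∀ i : Fin 3, φ r4' - φ (r' i) = φ (r 3) - φ (r i.castSucc) ∨
      φ r4' - φ (r' i) = -(φ (r 3) - φ (r i.castSucc)) := fun i =>
    (h i).imp (fun e => by simpa using congrArg φ e)
      (fun e => by simpa only [map_sub, map_neg] using congrArg φ e)
  have hmem : ∀ i, φ (r' i) = 0 ∨ ∃ a, r' i = r a := by
    intro i
    rcases hr' i with hP | h0 | h1 | h2 | h3
    · left
      simpa [hPdef] using hP
    · exact Or.inr ⟨0, h0⟩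
    · exact Or.inr ⟨1, h1⟩
    · exact Or.inr ⟨2, h2⟩
    · exact Or.inr ⟨3, h3⟩
  have hne2 : ∀ i, φ (r' i) ≠ 2 := by
    intro i
    rcases hmem i with h0 | ⟨a, ha⟩
    · rw [h0]; decide
    · rw [ha]
      rcases hr3 a with e | e <;> rw [e] <;> decide
  have hex : ∀ y : ZMod 4, y ∈ ({1, 3} : Set (ZMod 4)) →
      ∃ i : Fin 3, φ (r i.castSucc) = y := by
    intro y hy
    rw [← himg] at hy
    obtain ⟨g, rfl | rfl | rfl, hg⟩ := hy
    · exact ⟨0, hg⟩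
    · exact ⟨1, hg⟩
    · exact ⟨2, hg⟩
  obtain ⟨p, hp⟩ := hex 1 (by simp)
  obtain ⟨q, hq⟩ := hex 3 (by simp)
  have hodd : φ r4' = 1 ∨ φ r4' = 3 :=
    odd_of_residues _ _ _ _ (hr3 3) (hne2 p) (hne2 q) (hp ▸ hφh p) (hq ▸ hφh q)
  have hidx : ∀ i, ∃ a, r' i = r a := fun i =>
    (hmem i).resolve_left (residue_ne_zero _ _ _ _ hodd (hr3 3) (hr3 _) (hφh i))
  choose a ha using hidx
  have hd := distinctDiffs_of_ne hdiff
  have H0 : r4' - r (a 0) = r 3 - r 0 ∨ r4' - r (a 0) = -(r 3 - r 0) := ha 0 ▸ h 0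
  have H1 : r4' - r (a 1) = r 3 - r 1 ∨ r4' - r (a 1) = -(r 3 - r 1) := ha 1 ▸ h 1
  have H2 : r4' - r (a 2) = r 3 - r 2 ∨ r4' - r (a 2) = -(r 3 - r 2) := ha 2 ▸ h 2
  have key : r4' = r 3 ∧ a 0 = 0 ∧ a 1 = 1 ∧ a 2 = 2 := by
    have s02 : r 3 + r 3 + r 3 ≠ r 0 + r 2 + r 1 := by rwa [add_right_comm (r 0)]
    have s12 : r 3 + r 3 + r 3 ≠ r 1 + r 2 + r 0 := by rwa [add_comm _ (r 0), ← add_assoc]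
    rcases id H0 with p0 | m0 <;> rcases id H1 with p1 | m1
    · exact eq_of_plus_plus hd (by decide) (by decide) p0 p1 H2
    · rcases id H2 with p2 | m2
      · obtain ⟨e, e0, e2, e1⟩ := eq_of_plus_plus hd (by decide) (by decide) p0 p2 H1
        exact ⟨e, e0, e1, e2⟩
      · exact (false_of_minus_minus hd (by decide) (by decide) (by decide) (by decide)
          (by decide) (by decide) s12 m1 m2 H0).elim
    · rcases id H2 with p2 | m2
      · obtain ⟨e, e1, e2, e0⟩ := eq_of_plus_plus hd (by decide) (by decide) p1 p2 H0
        exact ⟨e, e0, e1, e2⟩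
      · exact (false_of_minus_minus hd (by decide) (by decide) (by decide) (by decide)
          (by decide) (by decide) s02 m0 m2 H1).elim
    · exact (false_of_minus_minus hd (by decide) (by decide) (by decide) (by decide)
        (by decide) (by decide) h34 m0 m1 H2).elim
  obtain ⟨e, e0, e1, e2⟩ := key
  refine ⟨e, fun i => ?_⟩
  rw [ha i]
  fin_cases i
  · exact congrArg r e0
  · exact congrArg r e1
  · exact congrArg r e2
end

section
/- For every integer s > 1 there exist points r_1,…,r_{s+1} ∈ ℤ^s with r_1 ∈ 8ℤ^s + (1,0,…,0) and r_2 ∈ 8ℤ^s + (5,0,…,0), and a subset P ⊆ 8ℤ^s disjoint from R = {r_1,…,r_{s+1}}, such that 8ℤ^s ∖ P is contained in the zero set of a nonzero real polynomial in s variables (so P contains almost every point of 8ℤ^s), and (P, R) is a strictly addressable workspace–base scheme on D = ℤ^s with respect to Euclidean distance. -/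
/-!
Write `e` for the first unit vector and take the base points `b = 5e` and `c j = e + 8 j e_j`
for `0 ≤ j < s`, so that `c 0 = e`; these are the `s + 1` points of `R`.

*Congruences.*  Modulo 16, the squared distance from `p'` to a point of `8ℤ^s + t e` is
`N - 2 t a + t²`, where `N = |p'|²` and `a` is the first coordinate of `p'`
(`sqDist_modEq`).  For `p ∈ 8ℤ^s` the distances to `c j` are `1` and the distance to `b` is `9`
modulo 16.  If some `r' i` lay in `8ℤ^s`, then `N` would be odd, all odd squared distances would
come from points of `8ℤ^s`, and these are all `N`, which cannot be both `1` and `9`.  So every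
`r' i` lies in `R`, and modulo 16 either `b` corresponds to `b` and each `c j` to some
`c (σ j)`, or every `c j` corresponds to `b`.

*Genericity.*  The coordinates of a point are affine functions of its squared distances to `R`
(`recon_zero`, `recon_ne`).  Put the distances to the `c j` through a map `τ` before applying these
functions: the result is a point `recon τ p`, and `defect τ p = |recon τ p - b|² - |p - b|²` is
polynomial in `p`.  If `σ` is a permutation with inverse `τ`, then `p' = recon τ p`, so
`defect τ p = 0`.
At `p = b` the distances to the `c j` are `16 + 64 j²`, which are distinct, and hence
`defect τ b ≠ 0` unless `τ = id`.  The product `bad` of all `defect τ` for `τ ≠ id` and of all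
differences of squared distances to `c i` and `c j` for `i ≠ j` is therefore nonzero at `b`, and
`P` is the part of `8ℤ^s` where it does not vanish.  On `P` the map `σ` is injective, hence a
permutation, hence the identity, and `p'` has the same distances to `R` as `p`;
the case in which every `c j` corresponds to `b` is excluded because the distances from `p` to
`c 0` and `c 1` differ.
-/

namespace GlobEuc

/-- Squared Euclidean distance between lattice points of `ℤ^s`.  Two pairs of
lattice points are equivalent under the Euclidean group `E(s)` iff their
(squared) distances agree. -/
def sqDist {s : ℕ} (x y : Fin s → ℤ) : ℤ := ∑ i, (x i - y i) ^ 2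

/-- Strict addressability of the workspace--base scheme `(P, {r 1,…,r k})` in
`ℤ^s` with respect to Euclidean distance: for every `p ∈ P` and every
`(k+1)`-tuple `(p', r' 1, …, r' k) ∈ ℤ^s × (P ∪ R)^k` with
`|p' − r' i| = |p − r i|` for all `i`, one has `p' = p` and `r' i = r i`. -/
def StrictlyAddressableEuc {s : ℕ} (P : Set (Fin s → ℤ)) {k : ℕ}
    (r : Fin k → (Fin s → ℤ)) : Prop :=
  ∀ p ∈ P, ∀ p' : Fin s → ℤ, ∀ r' : Fin k → (Fin s → ℤ),
    (∀ i, r' i ∈ P ∪ Set.range r) →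
    (∀ i, sqDist p' (r' i) = sqDist p (r i)) →
    p' = p ∧ ∀ i, r' i = r i

end GlobEuc

namespace GlobEuc

open MvPolynomial

/-! ### Base points and congruences modulo 16 -/

/-- The base point `5e`, where `e` is the unit vector of the coordinate `o`. -/
def basePt {s : ℕ} (o : Fin s) : Fin s → ℤ := fun i => if i = o then 5 else 0

/-- The base points `e + 8 j e_j`; for `j = 0` this is `e`. -/
def sidePt {s : ℕ} (o j : Fin s) : Fin s → ℤ :=
  fun i => (if i = o then 1 else 0) + (if i = j then 8 * ((j : ℕ) : ℤ) else 0)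

/-- The point `a` lies in the coset `8ℤ^s + t e`. -/
def InCoset {s : ℕ} (o : Fin s) (t : ℤ) (a : Fin s → ℤ) : Prop :=
  ∃ z : Fin s → ℤ, ∀ i, a i = 8 * z i + if i = o then t else 0

lemma basePt_coset {s : ℕ} (o : Fin s) : InCoset o 5 (basePt o) :=
  ⟨0, fun i => by simp [basePt]⟩

lemma sidePt_coset {s : ℕ} (o j : Fin s) : InCoset o 1 (sidePt o j) :=
  ⟨fun i => if i = j then ((j : ℕ) : ℤ) else 0, fun i => by
    simp only [sidePt]; split_ifs <;> ring⟩

lemma zero_coset {s : ℕ} (o : Fin s) {x : Fin s → ℤ} (hx : ∀ i, (8 : ℤ) ∣ x i) :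
    InCoset o 0 x := by
  choose z hz using hx
  exact ⟨z, fun i => by simp [hz i]⟩

lemma sqDist_modEq {s : ℕ} (o : Fin s) (p a : Fin s → ℤ) (t : ℤ) (h : InCoset o t a) :
    (16 : ℤ) ∣ sqDist p a - (∑ i, p i ^ 2 - 2 * t * p o + t ^ 2) := by
  obtain ⟨z, hz⟩ := h
  have e : sqDist p a - (∑ i, p i ^ 2 - 2 * t * p o + t ^ 2) =
      ∑ i, ((p i - a i) ^ 2 - p i ^ 2 + if i = o then 2 * t * p i - t ^ 2 else 0) := by
    rw [Finset.sum_add_distrib, Finset.sum_sub_distrib, Finset.sum_ite_eq' Finset.univ o]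
    simp only [sqDist, Finset.mem_univ, if_true]
    ring
  rw [e]
  refine Finset.dvd_sum fun i _ => ?_
  rw [hz i]
  split_ifs
  · exact ⟨4 * z i ^ 2 - p i * z i + z i * t, by ring⟩
  · exact ⟨4 * z i ^ 2 - p i * z i, by ring⟩

lemma sqDist_modEq_of_dvd {s : ℕ} (o : Fin s) (p a : Fin s → ℤ) (t : ℤ)
    (hp : ∀ i, (8 : ℤ) ∣ p i) (h : InCoset o t a) :
    (16 : ℤ) ∣ sqDist p a - t ^ 2 := by
  have h1 := sqDist_modEq o p a t h
  have h2 : (16 : ℤ) ∣ ∑ i, p i ^ 2 := Finset.dvd_sum fun i _ => by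
    obtain ⟨z, hz⟩ := hp i
    exact ⟨4 * z ^ 2, by rw [hz]; ring⟩
  have h3 : (16 : ℤ) ∣ 2 * t * p o := by
    obtain ⟨z, hz⟩ := hp o
    exact ⟨t * z, by rw [hz]; ring⟩
  have h4 := dvd_add h1 (dvd_sub h2 h3)
  rwa [show ∀ A B C D : ℤ, A - (B - C + D) + (B - C) = A - D from fun _ _ _ _ => by ring] at h4

/-! ### Reconstruction of a point from its distances -/

/-- The squared Euclidean distance from a real point to a lattice point. -/
def realSq {s : ℕ} (x : Fin s → ℝ) (a : Fin s → ℤ) : ℝ := ∑ i, (x i - (a i : ℝ)) ^ 2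

lemma realSq_cast {s : ℕ} (p a : Fin s → ℤ) :
    realSq (fun i => (p i : ℝ)) a = (sqDist p a : ℝ) := by
  simp [realSq, sqDist]

lemma recon_zero {s : ℕ} (o : Fin s) (ho : (o : ℕ) = 0) (x : Fin s → ℝ) :
    x o = 1 / 8 * (24 - (realSq x (basePt o) - realSq x (sidePt o o))) := by
  have : realSq x (basePt o) - realSq x (sidePt o o) = 24 - 8 * x o := by
    simp only [realSq]
    rw [← Finset.sum_sub_distrib, Finset.sum_eq_single o]
    · simp [basePt, sidePt, ho]; ring
    · intro i _ hi
      simp [basePt, sidePt, hi]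
    · simp
  rw [this]; ring

lemma recon_ne {s : ℕ} (o : Fin s) (ho : (o : ℕ) = 0) (x : Fin s → ℝ) (i : Fin s) (hi : i ≠ o) :
    x i = 1 / (16 * ((i : ℕ) : ℝ)) *
      (64 * ((i : ℕ) : ℝ) ^ 2 - (realSq x (sidePt o i) - realSq x (sidePt o o))) := by
  have : realSq x (sidePt o i) - realSq x (sidePt o o) =
      64 * ((i : ℕ) : ℝ) ^ 2 - 16 * ((i : ℕ) : ℝ) * x i := by
    simp only [realSq]
    rw [← Finset.sum_sub_distrib, Finset.sum_eq_single i]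
    · simp [sidePt, hi]; ring
    · intro k _ hk
      simp [sidePt, hk, ho]
    · simp
  have hi0 : ((i : ℕ) : ℝ) ≠ 0 := by
    intro h
    exact hi (Fin.ext (by rw [ho]; exact_mod_cast h))
  rw [this]; field_simp; ring

/-- The squared distance to `a` as a polynomial. -/
noncomputable def sqPoly {s : ℕ} (a : Fin s → ℤ) : MvPolynomial (Fin s) ℝ :=
  ∑ i, (X i - C (a i : ℝ)) ^ 2

lemma eval_sqPoly {s : ℕ} (x : Fin s → ℝ) (a : Fin s → ℤ) :
    eval x (sqPoly a) = realSq x a := by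
  simp [sqPoly, realSq]

/-- The `i`-th coordinate of the point reconstructed from the squared distances to the base points
after those to the points `sidePt o j` have been rearranged by `τ`. -/
noncomputable def recon {s : ℕ} (o : Fin s) (τ : Fin s → Fin s) (i : Fin s) :
    MvPolynomial (Fin s) ℝ :=
  if i = o then C (1 / 8) * (C 24 - (sqPoly (basePt o) - sqPoly (sidePt o (τ o))))
  else C (1 / (16 * ((i : ℕ) : ℝ))) * (C (64 * ((i : ℕ) : ℝ) ^ 2) -
    (sqPoly (sidePt o (τ i)) - sqPoly (sidePt o (τ o))))

/-- The failure of the point `recon o τ` to have the prescribed distance from `basePt o`. -/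
noncomputable def defect {s : ℕ} (o : Fin s) (τ : Fin s → Fin s) : MvPolynomial (Fin s) ℝ :=
  ∑ i, (recon o τ i - C (basePt o i : ℝ)) ^ 2 - sqPoly (basePt o)

lemma eval_defect {s : ℕ} (o : Fin s) (τ : Fin s → Fin s) (x : Fin s → ℝ) :
    eval x (defect o τ) =
      realSq (fun i => eval x (recon o τ i)) (basePt o) - realSq x (basePt o) := by
  simp [defect, realSq, eval_sqPoly]

lemma eval_recon {s : ℕ} (o : Fin s) (ho : (o : ℕ) = 0) (τ : Fin s → Fin s) (x y : Fin s → ℝ)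
    (hb : realSq y (basePt o) = realSq x (basePt o))
    (hc : ∀ j, realSq y (sidePt o j) = realSq x (sidePt o (τ j))) (i : Fin s) :
    eval x (recon o τ i) = y i := by
  by_cases hi : i = o
  · subst hi
    rw [recon_zero i ho y, hb, hc]
    simp [recon, eval_sqPoly]
  · rw [recon_ne o ho y i hi, hc, hc]
    simp [recon, eval_sqPoly, hi]

lemma realSq_basePt_self {s : ℕ} (o : Fin s) :
    realSq (fun i => (basePt o i : ℝ)) (basePt o) = 0 := by
  simp [realSq]

lemma realSq_basePt_sidePt {s : ℕ} (o : Fin s) (ho : (o : ℕ) = 0) (j : Fin s) :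
    realSq (fun i => (basePt o i : ℝ)) (sidePt o j) = 16 + 64 * ((j : ℕ) : ℝ) ^ 2 := by
  have : ∀ i, ((basePt o i : ℝ) - (sidePt o j i : ℝ)) ^ 2 =
      (if i = o then (16 : ℝ) else 0) + if i = j then 64 * ((j : ℕ) : ℝ) ^ 2 else 0 := by
    intro i
    by_cases hi : i = o <;> by_cases hj : i = j
    · have : (j : ℕ) = 0 := by rw [← hj, hi, ho]
      simp [basePt, sidePt, hi, this]; norm_num
    · have hj' : o ≠ j := hi ▸ hj
      simp [basePt, sidePt, hi, hj']; norm_num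
    · have hj' : j ≠ o := hj ▸ hi
      simp [basePt, sidePt, hj, hj']; ring
    · simp [basePt, sidePt, hi, hj]
  simp only [realSq, this, Finset.sum_add_distrib]
  simp

/-- Vanishing of the defect at `basePt o` forces the reconstructed point to be `basePt o`, so that
`τ` preserves the distances `16 + 64 j²`, which are distinct. -/
lemma defect_ne_zero {s : ℕ} (o : Fin s) (ho : (o : ℕ) = 0) (τ : Fin s → Fin s) (hτ : τ ≠ id) :
    eval (fun i => (basePt o i : ℝ)) (defect o τ) ≠ 0 := by
  intro h
  rw [eval_defect, realSq_basePt_self, sub_zero, realSq,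
    Finset.sum_eq_zero_iff_of_nonneg (fun _ _ => sq_nonneg _)] at h
  have h' : ∀ i, eval (fun i => (basePt o i : ℝ)) (recon o τ i) = (basePt o i : ℝ) := by
    intro i
    have := h i (Finset.mem_univ i)
    exact sub_eq_zero.mp (pow_eq_zero_iff (two_ne_zero) |>.mp this)
  have h0 : (((τ o : Fin s) : ℕ) : ℝ) = 0 := by
    have := h' o
    simp [recon, eval_sqPoly, realSq_basePt_self, realSq_basePt_sidePt o ho] at this
    simp [basePt] at this
    nlinarith
  apply hτ
  funext i
  by_cases hi : i = o
  · subst hi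
    exact Fin.ext (by rw [id, ho]; exact_mod_cast h0)
  · have hi0 : ((i : ℕ) : ℝ) ≠ 0 := by
      intro h
      exact hi (Fin.ext (by rw [ho]; exact_mod_cast h))
    have := h' i
    simp [recon, hi, eval_sqPoly, realSq_basePt_sidePt o ho, h0] at this
    simp [basePt, hi, hi0] at this
    have h2 : (((τ i : Fin s) : ℕ) : ℝ) ^ 2 = ((i : ℕ) : ℝ) ^ 2 := by linarith
    have h3 := (sq_eq_sq₀ (Nat.cast_nonneg _) (Nat.cast_nonneg _)).mp h2
    exact Fin.ext (by rw [id]; exact_mod_cast h3)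

/-! ### The exceptional polynomial -/

open scoped Classical in
/-- The polynomial whose zeros are discarded from `8ℤ^s`. -/
noncomputable def bad {s : ℕ} (o : Fin s) : MvPolynomial (Fin s) ℝ :=
  (∏ τ : Fin s → Fin s, if τ = id then 1 else defect o τ) *
    ∏ i : Fin s, ∏ j : Fin s, if i = j then 1 else sqPoly (sidePt o i) - sqPoly (sidePt o j)

lemma bad_ne_zero {s : ℕ} (o : Fin s) (ho : (o : ℕ) = 0) : bad o ≠ 0 := by
  intro h
  have h1 : eval (fun i => (basePt o i : ℝ)) (bad o) ≠ 0 := by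
    rw [bad, map_mul]
    refine mul_ne_zero ?_ ?_
    · rw [map_prod]
      refine Finset.prod_ne_zero_iff.mpr fun τ _ => ?_
      split_ifs with hτ
      · simp
      · exact defect_ne_zero o ho τ hτ
    · rw [map_prod]
      refine Finset.prod_ne_zero_iff.mpr fun i _ => ?_
      rw [map_prod]
      refine Finset.prod_ne_zero_iff.mpr fun j _ => ?_
      split_ifs with hij
      · simp
      · rw [map_sub, eval_sqPoly, eval_sqPoly, realSq_basePt_sidePt o ho,
          realSq_basePt_sidePt o ho]
        intro h
        have h2 : ((i : ℕ) : ℝ) ^ 2 = ((j : ℕ) : ℝ) ^ 2 := by linarith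
        have h3 := (sq_eq_sq₀ (Nat.cast_nonneg _) (Nat.cast_nonneg _)).mp h2
        exact hij (Fin.ext (by exact_mod_cast h3))
  exact h1 (by rw [h, map_zero])

lemma eq_id_of_defect {s : ℕ} (o : Fin s) (x : Fin s → ℝ) (hx : eval x (bad o) ≠ 0)
    (τ : Fin s → Fin s) (h : eval x (defect o τ) = 0) : τ = id := by
  by_contra hτ
  rw [bad, map_mul, map_prod] at hx
  have := Finset.prod_ne_zero_iff.mp (left_ne_zero_of_mul hx) τ (Finset.mem_univ _)
  rw [if_neg hτ] at this
  exact this h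

lemma eq_of_realSq_eq {s : ℕ} (o : Fin s) (x : Fin s → ℝ) (hx : eval x (bad o) ≠ 0)
    (i j : Fin s) (h : realSq x (sidePt o i) = realSq x (sidePt o j)) : i = j := by
  by_contra hij
  rw [bad, map_mul, map_prod (eval x) (fun i => ∏ j : Fin s, _)] at hx
  have := Finset.prod_ne_zero_iff.mp (right_ne_zero_of_mul hx) i (Finset.mem_univ _)
  rw [map_prod] at this
  have := Finset.prod_ne_zero_iff.mp this j (Finset.mem_univ _)
  rw [if_neg hij, map_sub, eval_sqPoly, eval_sqPoly] at this
  exact this (sub_eq_zero.mpr h)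

/-! ### Strict addressability -/

/-- The part of `8ℤ^s` on which `bad` does not vanish. -/
def workspace {s : ℕ} (o : Fin s) : Set (Fin s → ℤ) :=
  {p | (∀ i, (8 : ℤ) ∣ p i) ∧ eval (fun i => (p i : ℝ)) (bad o) ≠ 0}

/-- The base points; `basePt o` has index `1`, so that `sidePt o o` has index `0`. -/
def base {s : ℕ} (o : Fin s) : Fin (s + 1) → (Fin s → ℤ) :=
  Fin.insertNth (⟨1, by have := o.pos; omega⟩ : Fin (s + 1)) (basePt o) (sidePt o)

/-- A point known by its distances to `R` up to relabelling of the points `sidePt o j` is equal to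
`p`, and the relabelling is trivial. -/
lemma rigid {s : ℕ} (o : Fin s) (ho : (o : ℕ) = 0) (p p' : Fin s → ℤ) (hp : p ∈ workspace o)
    (σ : Fin s → Fin s) (hb : sqDist p' (basePt o) = sqDist p (basePt o))
    (hc : ∀ j, sqDist p' (sidePt o (σ j)) = sqDist p (sidePt o j)) : p' = p ∧ σ = id := by
  have hinj : Function.Injective σ := by
    intro i j hij
    apply eq_of_realSq_eq o _ hp.2
    rw [realSq_cast, realSq_cast, ← hc i, ← hc j, hij]
  have hbij := Finite.injective_iff_bijective.mp hinj
  obtain ⟨τ, hl, hr⟩ := Function.bijective_iff_has_inverse.mp hbij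
  have hrec := eval_recon o ho τ (fun i => (p i : ℝ)) (fun i => (p' i : ℝ))
    (by rw [realSq_cast, realSq_cast, hb])
    (fun j => by rw [realSq_cast, realSq_cast, ← hc, hr j])
  have hτ : τ = id := by
    apply eq_id_of_defect o _ hp.2
    rw [eval_defect]
    simp only [hrec]
    rw [realSq_cast, realSq_cast, hb, sub_self]
  subst hτ
  refine ⟨?_, funext fun j => hl j⟩
  have hrec' := eval_recon o ho id (fun i => (p i : ℝ)) (fun i => (p i : ℝ)) rfl (fun _ => rfl)
  funext i
  have := (hrec i).symm.trans (hrec' i)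
  exact_mod_cast this

lemma mem_cases {s : ℕ} (o : Fin s) {x : Fin s → ℤ} (hx : x ∈ workspace o ∪ Set.range (base o)) :
    InCoset o 0 x ∨ x = basePt o ∨ ∃ j, x = sidePt o j := by
  rcases hx with hx | ⟨i, rfl⟩
  · exact Or.inl (zero_coset o hx.1)
  · right
    rcases Fin.eq_self_or_eq_succAbove (⟨1, by have := o.pos; omega⟩ : Fin (s + 1)) i with h | ⟨j, h⟩
    · left; rw [h, base, Fin.insertNth_apply_same]
    · right; exact ⟨j, by rw [h, base, Fin.insertNth_apply_succAbove]⟩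

lemma addressable {s : ℕ} (hs : 1 < s) (o : Fin s) (ho : (o : ℕ) = 0) :
    StrictlyAddressableEuc (workspace o) (base o) := by
  intro p hp p' r' hr' hd
  set one : Fin (s + 1) := ⟨1, by omega⟩ with hone
  have base_one : base o one = basePt o := by rw [base, Fin.insertNth_apply_same]
  have base_side : ∀ j, base o (one.succAbove j) = sidePt o j := fun j => by
    rw [base, Fin.insertNth_apply_succAbove]
  have hdb := hd one
  have hdc := fun j => hd (one.succAbove j)
  have hrb := mem_cases o (hr' one)
  have hrc := fun j => mem_cases o (hr' (one.succAbove j))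
  rw [base_one] at hdb
  simp only [base_side] at hdc
  set N := ∑ i, p' i ^ 2
  have m9 := sqDist_modEq_of_dvd o p _ 5 hp.1 (basePt_coset o)
  have m1 := fun j => sqDist_modEq_of_dvd o p _ 1 hp.1 (sidePt_coset o j)
  have k0 : ∀ x, InCoset o 0 x → (16 : ℤ) ∣ sqDist p' x - N := fun x hx => by
    simpa using sqDist_modEq o p' x 0 hx
  have k5 := sqDist_modEq o p' _ 5 (basePt_coset o)
  have k1 := fun j => sqDist_modEq o p' _ 1 (sidePt_coset o j)
  rw [← hdb] at m9
  simp only [← hdc] at m1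
  -- If `basePt o` does not correspond to itself, it corresponds to some `sidePt o k`; then every
  -- `sidePt o j` corresponds to `basePt o`, so `p` is equidistant from `sidePt o 0` and
  -- `sidePt o 1`.
  have key : r' one = basePt o ∧ ∀ j, ∃ k, r' (one.succAbove j) = sidePt o k := by
    have hA : r' one = basePt o → ∀ j, ∃ k, r' (one.succAbove j) = sidePt o k := by
      intro h j
      rw [h] at m9
      rcases hrc j with h' | h' | h'
      · have := k0 _ h'
        have := m1 j
        omega
      · have := m1 j
        rw [h'] at this
        omega
      · exact h'
    have hB : r' one = basePt o := by
      rcases hrb with h | h | ⟨k, h⟩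
      · have h0 := k0 _ h
        rcases hrc o with h' | h' | ⟨k, h'⟩
        · have := k0 _ h'
          have := m1 o
          omega
        · have := m1 o
          rw [h'] at this
          omega
        · have := m1 o
          have := k1 k
          rw [h'] at *
          omega
      · exact h
      · exfalso
        rw [h] at m9
        have hk := k1 k
        have hall : ∀ j, r' (one.succAbove j) = basePt o := by
          intro j
          have hj := m1 j
          rcases hrc j with h' | h' | ⟨l, h'⟩
          · have := k0 _ h'
            omega
          · exact h'
          · have := k1 l
            rw [h'] at hj
            omega
        have := eq_of_realSq_eq o _ hp.2 o ⟨1, hs⟩ (by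
          rw [realSq_cast, realSq_cast, ← hdc, ← hdc, hall, hall])
        have := congrArg Fin.val this
        simp [ho] at this
    exact ⟨hB, hA hB⟩
  obtain ⟨hb, hc⟩ := key
  choose σ hσ using hc
  obtain ⟨h1, h2⟩ := rigid o ho p p' hp σ (by rw [← hdb, hb])
    (fun j => by rw [← hdc, hσ])
  refine ⟨h1, fun i => ?_⟩
  rcases Fin.eq_self_or_eq_succAbove one i with h | ⟨j, h⟩
  · rw [h, hb, base_one]
  · rw [h, hσ, h2, base_side, id]

end GlobEuc

open GlobEuc in
/-- For every `s > 1` there are points `r 1, …, r (s+1) ∈ ℤ^s` with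
`r 1 ∈ 8ℤ^s + (1,0,…,0)`, `r 2 ∈ 8ℤ^s + (5,0,…,0)`, and a set `P ⊆ 8ℤ^s` disjoint
from `R = {r 1,…,r (s+1)}` whose complement in `8ℤ^s` lies in the zero set of a
nonzero real polynomial in `s` variables, such that `(P, R)` is a strictly
addressable workspace--base scheme on `ℤ^s` with respect to Euclidean distance. -/
theorem stmt17 (s : ℕ) (hs : 1 < s) :
    ∃ (r : Fin (s + 1) → (Fin s → ℤ)) (P : Set (Fin s → ℤ)),
      (∃ z : Fin s → ℤ, r 0 =
        fun j => 8 * z j + (if j = ⟨0, by omega⟩ then 1 else 0)) ∧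
      (∃ z : Fin s → ℤ, r 1 =
        fun j => 8 * z j + (if j = ⟨0, by omega⟩ then 5 else 0)) ∧
      (∀ x ∈ P, ∀ i : Fin s, (8 : ℤ) ∣ x i) ∧
      Disjoint P (Set.range r) ∧
      (∃ f : MvPolynomial (Fin s) ℝ, f ≠ 0 ∧
        ∀ x : Fin s → ℤ, (∀ i, (8 : ℤ) ∣ x i) → x ∉ P →
          MvPolynomial.eval (fun i => (x i : ℝ)) f = 0) ∧
      StrictlyAddressableEuc P r := by
  have hs0 : 0 < s := by omega
  set o : Fin s := ⟨0, hs0⟩ with ho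
  have h1 : (1 : Fin (s + 1)) = ⟨1, by omega⟩ := by
    apply Fin.ext
    simp [Nat.mod_eq_of_lt (show 1 < s + 1 by omega)]
  have h0 : (0 : Fin (s + 1)) = (⟨1, by omega⟩ : Fin (s + 1)).succAbove o := by
    apply Fin.ext
    simp [Fin.succAbove, ho, Fin.lt_def]
  refine ⟨base o, workspace o, ⟨0, ?_⟩, ⟨0, ?_⟩, fun x hx => hx.1, ?_, ⟨bad o, bad_ne_zero o rfl, ?_⟩,
    addressable hs o rfl⟩
  · rw [h0, base, Fin.insertNth_apply_succAbove]
    funext j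
    simp [sidePt, ho]
  · rw [h1, base, Fin.insertNth_apply_same]
    funext j
    simp [basePt]
  · rw [Set.disjoint_left]
    rintro x hx ⟨i, rfl⟩
    have h8 := hx.1 o
    rcases Fin.eq_self_or_eq_succAbove (⟨1, by omega⟩ : Fin (s + 1)) i with h | ⟨j, h⟩
    · rw [h, base, Fin.insertNth_apply_same] at h8
      simp [basePt] at h8
    · rw [h, base, Fin.insertNth_apply_succAbove] at h8
      obtain ⟨z, hz⟩ := sidePt_coset o j
      rw [hz o, if_pos rfl] at h8
      omega
  · intro x hx hxP
    by_contra hne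
    exact hxP ⟨hx, hne⟩
end
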